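/- Let q ∈ ℂ with 0 < |q| < 1, and let x, y ∈ ℂ with y ≠ 0 and |x| < 1. Assume the family (i,j) ↦ τ(i-j) y^{i-j} x^j / ((q;q)_i (q;q)_j) indexed by ℕ×ℕ is absolutely summable. Then ∑_{i,j≥0} τ(i-j) y^{i-j} x^j / ((q;q)_i (q;q)_j) = (y;q)_∞ · (xq/y;q)_∞ / (x;q)_∞. -/

import Mathlib

/-- The finite q-shifted factorial `(a;q)_n = ∏_{k=0}^{n-1} (1 - a q^k)`. -/
noncomputable def qPoch (a q : ℂ) (n : ℕ) : ℂ := ∏ k ∈ Finset.range n, (1 - a * q ^ k)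

/-- The infinite q-shifted factorial `(a;q)_∞ = ∏_{k=0}^{∞} (1 - a q^k)`. -/
noncomputable def qPochInf (a q : ℂ) : ℂ := ∏' k : ℕ, (1 - a * q ^ k)

/-- `τ(n) = (-1)^n q^{n(n-1)/2}` for `n : ℤ` (note `n(n-1)/2 ≥ 0` for all `n : ℤ`). -/
noncomputable def qTauZ (q : ℂ) (n : ℤ) : ℂ := (-1 : ℂ) ^ n * q ^ ((n * (n - 1)) / 2).toNat

open Filter Topology

/- Euler's expansion of `(z;q)_∞` and the `q`-binomial theorem are both instances of one fact: a
power series `F(z) = ∑ c_n z^n` whose coefficients satisfy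
`c_{n+1} (1 - q^{n+1}) = c_n (α - β q^n)` obeys `(1 - α z) F(z) = (1 - β z) F(q z)`, and iterating
this along `z, q z, q² z, … → 0` gives `(α z;q)_∞ F(z) = c_0 (β z;q)_∞`.

In the double series, `τ(i - j) = τ(i) τ(-j) q^{-ij}` turns the sum over `i` into Euler's expansion
of `(y q^{-j};q)_∞`. Reversing its first `j` factors rewrites the inner sum as
`(y;q)_∞ (q/y;q)_j`, and the remaining sum over `j` is the `q`-binomial series. -/

section QBinomialSeq

variable {𝕜 : Type*} [NormedField 𝕜] {q α β : 𝕜} {c : ℕ → 𝕜}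

/-- The two-term `q`-recurrence satisfied by the Taylor coefficients of the `q`-binomial function
`z ↦ (β z;q)_∞ / (α z;q)_∞`. The value `c 0` is left free, and `α` is kept as a parameter so that
`α = 0` covers the entire function `(β z;q)_∞`. -/
def IsQBinomialSeq (q α β : 𝕜) (c : ℕ → 𝕜) : Prop :=
  ∀ n, c (n + 1) * (1 - q ^ (n + 1)) = c n * (α - β * q ^ n)

lemma mul_pow_ne_one_of_norm_lt_one {a : 𝕜} (ha : ‖a‖ < 1) (hq : ‖q‖ ≤ 1) (k : ℕ) :
    a * q ^ k ≠ 1 := by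
  intro h
  have hlt : ‖a * q ^ k‖ < 1 := by
    rw [norm_mul, norm_pow]
    exact mul_lt_one_of_nonneg_of_lt_one_left (norm_nonneg a) ha (pow_le_one₀ (norm_nonneg q) hq)
  exact hlt.ne (by rw [h, norm_one])

lemma one_sub_pow_succ_ne_zero_of_norm_lt_one (hq : ‖q‖ < 1) (n : ℕ) : 1 - q ^ (n + 1) ≠ 0 := by
  rw [pow_succ']
  exact sub_ne_zero.mpr (mul_pow_ne_one_of_norm_lt_one hq hq.le n).symm

namespace IsQBinomialSeq

lemma summable_mul_pow [CompleteSpace 𝕜] (hc : IsQBinomialSeq q α β c) (hq : ‖q‖ < 1) {z : 𝕜}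
    (hz : ‖α * z‖ < 1) : Summable fun n => c n * z ^ n := by
  have hratio : Tendsto (fun n : ℕ => ‖(α - β * q ^ n) / (1 - q ^ (n + 1)) * z‖) atTop
      (𝓝 ‖α * z‖) := by
    have hpow := tendsto_pow_atTop_nhds_zero_of_norm_lt_one hq
    have hpow_succ := (tendsto_add_atTop_iff_nat 1).mpr hpow
    simpa using ((((hpow.const_mul β).const_sub α).div (hpow_succ.const_sub 1)
      (by simp)).mul_const z).norm
  obtain ⟨r, hzr, hr⟩ := exists_between hz
  refine summable_of_ratio_norm_eventually_le hr ?_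
  filter_upwards [hratio.eventually_le_const hzr] with n hn
  have hstep : c (n + 1) * z ^ (n + 1)
      = (α - β * q ^ n) / (1 - q ^ (n + 1)) * z * (c n * z ^ n) := by
    rw [eq_div_of_mul_eq (one_sub_pow_succ_ne_zero_of_norm_lt_one hq n) (hc n)]
    ring
  rw [hstep, norm_mul]
  gcongr

lemma one_sub_mul_tsum [CompleteSpace 𝕜] (hc : IsQBinomialSeq q α β c) (hq : ‖q‖ < 1) {z : 𝕜}
    (hz : ‖α * z‖ < 1) :
    (1 - α * z) * ∑' n, c n * z ^ n = (1 - β * z) * ∑' n, c n * (q * z) ^ n := by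
  have hqz : ‖α * (q * z)‖ < 1 := by
    rw [mul_left_comm, norm_mul]
    exact mul_lt_one_of_nonneg_of_lt_one_left (norm_nonneg q) hq hz.le
  have hsum := hc.summable_mul_pow hq hz
  have hsum_q := hc.summable_mul_pow hq hqz
  have hdiff : ∑' n, c n * z ^ n - ∑' n, c n * (q * z) ^ n
      = α * z * ∑' n, c n * z ^ n - β * z * ∑' n, c n * (q * z) ^ n := by
    calc ∑' n, c n * z ^ n - ∑' n, c n * (q * z) ^ n
        = ∑' n, (c (n + 1) * z ^ (n + 1) - c (n + 1) * (q * z) ^ (n + 1)) := by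
          rw [← hsum.tsum_sub hsum_q, (hsum.sub hsum_q).tsum_eq_zero_add]
          simp only [pow_zero, sub_self, zero_add]
      _ = ∑' n, (α * z * (c n * z ^ n) - β * z * (c n * (q * z) ^ n)) := by
          refine tsum_congr fun n => ?_
          rw [mul_pow, mul_pow]
          linear_combination z ^ (n + 1) * hc n
      _ = α * z * ∑' n, c n * z ^ n - β * z * ∑' n, c n * (q * z) ^ n := by
          rw [(hsum.mul_left _).tsum_sub (hsum_q.mul_left _), tsum_mul_left, tsum_mul_left]
  linear_combination hdiff

end IsQBinomialSeq

lemma tendsto_tsum_mul_pow_of_tendsto_zero [CompleteSpace 𝕜] {ι : Type*} {l : Filter ι}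
    {u : ι → 𝕜} (hu : Tendsto u l (𝓝 0)) {z : 𝕜} (hc : Summable fun n => ‖c n * z ^ n‖) :
    Tendsto (fun k => ∑' n, c n * (u k * z) ^ n) l (𝓝 (c 0)) := by
  have hconst : ∑' n, c n * (0 * z) ^ n = c 0 := by
    rw [tsum_eq_single 0 fun n hn => by simp [hn]]
    simp
  rw [← hconst]
  refine tendsto_tsum_of_dominated_convergence hc
    (fun n => ((hu.mul_const z).pow n).const_mul (c n)) ?_
  have hu_le : ∀ᶠ k in l, ‖u k‖ ≤ 1 :=
    hu.norm.eventually_le_const (by rw [norm_zero]; exact one_pos)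
  filter_upwards [hu_le] with k hk n
  rw [mul_pow, mul_left_comm, norm_mul, norm_pow]
  exact mul_le_of_le_one_left (norm_nonneg _) (pow_le_one₀ (norm_nonneg _) hk)

end QBinomialSeq

section QPochhammer

variable {q : ℂ}

lemma qPoch_zero (a q : ℂ) : qPoch a q 0 = 1 := Finset.prod_range_zero _

lemma qPoch_succ (a q : ℂ) (n : ℕ) : qPoch a q (n + 1) = qPoch a q n * (1 - a * q ^ n) :=
  Finset.prod_range_succ _ _

lemma qPoch_succ' (a q : ℂ) (n : ℕ) : qPoch a q (n + 1) = (1 - a) * qPoch (a * q) q n := by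
  simp only [qPoch, Finset.prod_range_succ', pow_zero, mul_one, pow_succ', mul_assoc, mul_comm]

lemma qPoch_self_succ (q : ℂ) (n : ℕ) :
    qPoch q q (n + 1) = qPoch q q n * (1 - q ^ (n + 1)) := by
  rw [qPoch_succ, pow_succ']

lemma qPoch_self_ne_zero (hq : ‖q‖ < 1) (n : ℕ) : qPoch q q n ≠ 0 :=
  Finset.prod_ne_zero_iff.mpr fun k _ =>
    sub_ne_zero.mpr (mul_pow_ne_one_of_norm_lt_one hq hq.le k).symm

lemma summable_norm_neg_mul_pow (hq : ‖q‖ < 1) (a : ℂ) :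
    Summable fun k : ℕ => ‖-(a * q ^ k)‖ := by
  simpa only [norm_neg, norm_mul, norm_pow] using
    (summable_geometric_of_lt_one (norm_nonneg q) hq).mul_left ‖a‖

lemma multipliable_one_sub_mul_pow (hq : ‖q‖ < 1) (a : ℂ) :
    Multipliable fun k : ℕ => 1 - a * q ^ k := by
  simpa only [sub_eq_add_neg] using
    multipliable_one_add_of_summable (summable_norm_neg_mul_pow hq a)

lemma tendsto_qPoch (hq : ‖q‖ < 1) (a : ℂ) : Tendsto (qPoch a q) atTop (𝓝 (qPochInf a q)) :=
  (multipliable_one_sub_mul_pow hq a).hasProd.tendsto_prod_nat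

lemma qPochInf_zero (q : ℂ) : qPochInf 0 q = 1 := by
  simp only [qPochInf, zero_mul, sub_zero, tprod_one]

lemma qPochInf_ne_zero (hq : ‖q‖ < 1) {a : ℂ} (ha : ∀ k : ℕ, a * q ^ k ≠ 1) :
    qPochInf a q ≠ 0 := by
  simp only [qPochInf, sub_eq_add_neg]
  refine tprod_one_add_ne_zero_of_summable (fun k => ?_) (summable_norm_neg_mul_pow hq a)
  rw [← sub_eq_add_neg]
  exact sub_ne_zero.mpr (ha k).symm

lemma qPoch_mul_qPochInf_mul_pow (hq : ‖q‖ < 1) (a : ℂ) (n : ℕ) :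
    qPoch a q n * qPochInf (a * q ^ n) q = qPochInf a q := by
  have hshift : ∀ k, 1 - a * q ^ n * q ^ k = 1 - a * q ^ (k + n) := fun k => by ring
  simp only [qPochInf, hshift]
  refine Multipliable.prod_mul_tprod_nat_mul' (f := fun k => 1 - a * q ^ k) ?_
  simpa only [hshift] using multipliable_one_sub_mul_pow hq (a * q ^ n)

end QPochhammer

section QBinomialTheorem

variable {q : ℂ}

namespace IsQBinomialSeq

variable {α β z : ℂ} {c : ℕ → ℂ}

lemma qPoch_mul_tsum (hc : IsQBinomialSeq q α β c) (hq : ‖q‖ < 1) (hz : ‖α * z‖ < 1) (k : ℕ) :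
    qPoch (α * z) q k * ∑' n, c n * z ^ n
      = qPoch (β * z) q k * ∑' n, c n * (q ^ k * z) ^ n := by
  induction k with
  | zero => simp only [qPoch_zero, pow_zero, one_mul]
  | succ k ih =>
    have hqz : ‖α * (q ^ k * z)‖ < 1 := by
      rw [mul_left_comm, norm_mul, norm_pow]
      exact mul_lt_one_of_nonneg_of_lt_one_right (pow_le_one₀ (norm_nonneg q) hq.le)
        (norm_nonneg _) hz
    rw [qPoch_succ, qPoch_succ, pow_succ', mul_assoc q]
    linear_combination
      (1 - α * z * q ^ k) * ih + qPoch (β * z) q k * hc.one_sub_mul_tsum hq hqz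

lemma qPochInf_mul_tsum (hc : IsQBinomialSeq q α β c) (hq : ‖q‖ < 1) (hz : ‖α * z‖ < 1) :
    qPochInf (α * z) q * ∑' n, c n * z ^ n = qPochInf (β * z) q * c 0 := by
  have hleft := (tendsto_qPoch hq (α * z)).mul_const (∑' n, c n * z ^ n)
  have hright := (tendsto_qPoch hq (β * z)).mul
    (tendsto_tsum_mul_pow_of_tendsto_zero (tendsto_pow_atTop_nhds_zero_of_norm_lt_one hq)
      (hc.summable_mul_pow hq hz).norm)
  exact tendsto_nhds_unique (hleft.congr (hc.qPoch_mul_tsum hq hz)) hright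

end IsQBinomialSeq

lemma isQBinomialSeq_qPoch_div_qPoch (hq : ‖q‖ < 1) (a : ℂ) :
    IsQBinomialSeq q 1 a fun n => qPoch a q n / qPoch q q n := by
  intro n
  have hqn := qPoch_self_ne_zero hq n
  have hfactor := one_sub_pow_succ_ne_zero_of_norm_lt_one hq n
  beta_reduce
  rw [qPoch_succ, qPoch_self_succ]
  field_simp

theorem tsum_qPoch_div_qPoch_mul_pow (hq : ‖q‖ < 1) (a : ℂ) {z : ℂ} (hz : ‖z‖ < 1) :
    ∑' n, qPoch a q n / qPoch q q n * z ^ n = qPochInf (a * z) q / qPochInf z q := by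
  rw [eq_div_iff (qPochInf_ne_zero hq (mul_pow_ne_one_of_norm_lt_one hz hq.le)), mul_comm]
  simpa only [one_mul, qPoch_zero, div_one, mul_one] using
    (isQBinomialSeq_qPoch_div_qPoch hq a).qPochInf_mul_tsum hq (by rwa [one_mul])

end QBinomialTheorem

section QTau

variable {q : ℂ}

lemma add_mul_add_sub_one_ediv_two (m n : ℤ) :
    (m + n) * (m + n - 1) / 2 = m * (m - 1) / 2 + n * (n - 1) / 2 + m * n := by
  have hm := Int.ediv_two_mul_two_of_even (Int.even_mul_pred_self m)
  have hn := Int.ediv_two_mul_two_of_even (Int.even_mul_pred_self n)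
  have hmn := Int.ediv_two_mul_two_of_even (Int.even_mul_pred_self (m + n))
  refine mul_right_cancel₀ two_ne_zero ?_
  linear_combination hmn - hm - hn

lemma mul_sub_one_ediv_two_nonneg (n : ℤ) : 0 ≤ n * (n - 1) / 2 := by
  refine Int.ediv_nonneg ?_ zero_le_two
  rcases le_or_gt n 0 with hn | hn
  · exact mul_nonneg_of_nonpos_of_nonpos hn (by lia)
  · exact mul_nonneg hn.le (by lia)

lemma qTauZ_zero (q : ℂ) : qTauZ q 0 = 1 := by simp [qTauZ]

lemma qTauZ_neg_one (q : ℂ) : qTauZ q (-1) = -q := by simp [qTauZ]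

lemma qTauZ_natCast_succ (q : ℂ) (n : ℕ) : qTauZ q ((n + 1 : ℕ) : ℤ) = -q ^ n * qTauZ q n := by
  have hexp : (((n + 1 : ℕ) : ℤ) * ((n + 1 : ℕ) - 1) / 2).toNat
      = ((n : ℤ) * (n - 1) / 2).toNat + n := by
    have hadd := add_mul_add_sub_one_ediv_two n 1
    have hnonneg := mul_sub_one_ediv_two_nonneg n
    push_cast
    lia
  rw [qTauZ, qTauZ, hexp, zpow_natCast, zpow_natCast, pow_add, pow_succ]
  ring

lemma qTauZ_add (hq : q ≠ 0) (m n : ℤ) :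
    qTauZ q (m + n) = qTauZ q m * qTauZ q n * q ^ (m * n) := by
  have hzpow : ∀ k : ℤ, qTauZ q k = (-1) ^ k * q ^ (k * (k - 1) / 2) := fun k => by
    rw [qTauZ, ← zpow_natCast, Int.toNat_of_nonneg (mul_sub_one_ediv_two_nonneg k)]
  rw [hzpow, hzpow, hzpow, add_mul_add_sub_one_ediv_two, zpow_add₀ hq, zpow_add₀ hq,
    zpow_add₀ (neg_ne_zero.mpr one_ne_zero)]
  ring

lemma isQBinomialSeq_qTauZ_div_qPoch (hq : ‖q‖ < 1) :
    IsQBinomialSeq q 0 1 fun n => qTauZ q n / qPoch q q n := by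
  intro n
  have hqn := qPoch_self_ne_zero hq n
  have hfactor := one_sub_pow_succ_ne_zero_of_norm_lt_one hq n
  beta_reduce
  rw [qTauZ_natCast_succ, qPoch_self_succ]
  field_simp
  ring

theorem tsum_qTauZ_div_qPoch_mul_pow (hq : ‖q‖ < 1) (z : ℂ) :
    ∑' n : ℕ, qTauZ q n / qPoch q q n * z ^ n = qPochInf z q := by
  simpa only [zero_mul, qPochInf_zero, one_mul, Nat.cast_zero, qTauZ_zero, qPoch_zero, div_one,
    mul_one] using (isQBinomialSeq_qTauZ_div_qPoch hq).qPochInf_mul_tsum (z := z) hq (by simp)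

lemma qTauZ_neg_mul_zpow_neg_mul_qPoch (hq : q ≠ 0) {y : ℂ} (hy : y ≠ 0) (j : ℕ) :
    qTauZ q (-j) * y ^ (-j : ℤ) * qPoch (y / q ^ j) q j = qPoch (q / y) q j := by
  induction j with
  | zero => simp [qTauZ_zero, qPoch_zero]
  | succ j ih =>
    have htau : qTauZ q (-(j + 1 : ℕ)) = -q ^ (j + 1) * qTauZ q (-j) := by
      have hexp : -((j : ℤ)) * -1 = j := by ring
      rw [Nat.cast_succ, neg_add, qTauZ_add hq, qTauZ_neg_one, hexp, zpow_natCast]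
      ring
    have hpow : y ^ (-(j + 1 : ℕ) : ℤ) = y ^ (-j : ℤ) * y⁻¹ := by
      rw [Nat.cast_succ, neg_add, zpow_add₀ hy, zpow_neg_one]
    have hshift : y / q ^ (j + 1) * q = y / q ^ j := by
      rw [pow_succ, div_mul_eq_mul_div, mul_div_mul_right y (q ^ j) hq]
    rw [qPoch_succ', hshift, qPoch_succ, ← ih, htau, hpow]
    field_simp
    ring

lemma tsum_qTauZ_sub_mul_zpow_div_qPoch (hq₀ : q ≠ 0) (hq : ‖q‖ < 1) {y : ℂ} (hy : y ≠ 0)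
    (j : ℕ) :
    ∑' i : ℕ, qTauZ q (i - j) * y ^ (i - j : ℤ) / qPoch q q i
      = qPochInf y q * qPoch (q / y) q j := by
  have hterm : ∀ i : ℕ, qTauZ q (i - j) * y ^ (i - j : ℤ) / qPoch q q i
      = qTauZ q (-j) * y ^ (-j : ℤ) * (qTauZ q i / qPoch q q i * (y / q ^ j) ^ i) := fun i => by
    have hexp : q ^ ((i : ℤ) * -j) = ((q ^ j) ^ i)⁻¹ := by
      rw [mul_neg, zpow_neg, mul_comm, zpow_mul, zpow_natCast, zpow_natCast]
    rw [sub_eq_add_neg, qTauZ_add hq₀, zpow_add₀ hy, hexp, zpow_natCast, div_pow]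
    ring
  calc ∑' i : ℕ, qTauZ q (i - j) * y ^ (i - j : ℤ) / qPoch q q i
      = qTauZ q (-j) * y ^ (-j : ℤ) * qPochInf (y / q ^ j) q := by
        rw [tsum_congr hterm, tsum_mul_left, tsum_qTauZ_div_qPoch_mul_pow hq]
    _ = qTauZ q (-j) * y ^ (-j : ℤ) * qPoch (y / q ^ j) q j * qPochInf y q := by
        rw [← qPoch_mul_qPochInf_mul_pow hq (y / q ^ j) j,
          div_mul_cancel₀ y (pow_ne_zero j hq₀)]
        ring
    _ = qPochInf y q * qPoch (q / y) q j := by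
        rw [qTauZ_neg_mul_zpow_neg_mul_qPoch hq₀ hy, mul_comm]

end QTau

theorem stmt8 (q : ℂ) (hq0 : 0 < ‖q‖) (hq1 : ‖q‖ < 1)
    (x y : ℂ) (hy : y ≠ 0) (hx : ‖x‖ < 1)
    (h1 : Summable (fun p : ℕ × ℕ => ‖qTauZ q ((p.1 : ℤ) - (p.2 : ℤ)) *
      y ^ ((p.1 : ℤ) - (p.2 : ℤ)) * x ^ p.2 / (qPoch q q p.1 * qPoch q q p.2)‖)) :
    ∑' p : ℕ × ℕ, qTauZ q ((p.1 : ℤ) - (p.2 : ℤ)) *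
      y ^ ((p.1 : ℤ) - (p.2 : ℤ)) * x ^ p.2 / (qPoch q q p.1 * qPoch q q p.2)
    = qPochInf y q * qPochInf (x * q / y) q / qPochInf x q := by
  have hq : q ≠ 0 := norm_pos_iff.mp hq0
  have hinner : ∀ j : ℕ, ∑' i : ℕ, qTauZ q (i - j) * y ^ (i - j : ℤ) * x ^ j /
      (qPoch q q i * qPoch q q j)
      = qPochInf y q * (qPoch (q / y) q j / qPoch q q j * x ^ j) := fun j => by
    simp only [mul_div_mul_comm]
    rw [tsum_mul_right, tsum_qTauZ_sub_mul_zpow_div_qPoch hq hq1 hy]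
    ring
  calc _ = ∑' j : ℕ, ∑' i : ℕ, qTauZ q (i - j) * y ^ (i - j : ℤ) * x ^ j /
          (qPoch q q i * qPoch q q j) :=
        ((Equiv.prodComm ℕ ℕ).tsum_eq _).symm.trans h1.of_norm.prod_symm.tsum_prod
    _ = qPochInf y q * ∑' j, qPoch (q / y) q j / qPoch q q j * x ^ j := by
        rw [tsum_congr hinner, tsum_mul_left]
    _ = qPochInf y q * qPochInf (x * q / y) q / qPochInf x q := by
        rw [tsum_qPoch_div_qPoch_mul_pow hq1 (q / y) hx, div_mul_eq_mul_div, mul_comm q x,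
          ← mul_div_assoc]
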